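/- A symmetric matrix P = (ρ_{ij}) ∈ [−1,1]^{d×d} with unit diagonal is the correlation matrix of some random vector with Bern(1/2) margins if and only if there exist α_1,…,α_{2^{d−1}} ≥ 0 satisfying the 1 + d(d−1)/2 linear equations α_1 + ⋯ + α_{2^{d−1}} = 1 and Σ_{l=1}^{2^{d−1}} α_l·1{b_i(l) = b_j(l)} = (ρ_{ij} + 1)/2 for all 1 ≤ i < j ≤ d, where b(l) ∈ {0,1}^d denotes the binary expansion of l defined by l = 1 + Σ_{j=1}^d b_j(l)·2^{d−j}. -/

import Mathlib

open MeasureTheory ProbabilityTheory Set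

noncomputable section

/-- The uniform distribution on (0,1). -/
def unif01 : Measure ℝ := volume.restrict (Set.Ioo (0:ℝ) 1)

/-- Pearson's correlation coefficient of two real random variables. -/
def pearson {Ω : Type*} [MeasurableSpace Ω] (μ : Measure Ω) (Y1 Y2 : Ω → ℝ) : ℝ :=
  ((∫ ω, Y1 ω * Y2 ω ∂μ) - (∫ ω, Y1 ω ∂μ) * (∫ ω, Y2 ω ∂μ)) /
    Real.sqrt (variance Y1 μ * variance Y2 μ)

/-- The distribution function (CDF) of a measure on ℝ. -/
def cdfOf (ν : Measure ℝ) : ℝ → ℝ := fun x => (ν (Set.Iic x)).toReal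

/-- The quantile function (generalized inverse) of a distribution function. -/
def quantileFn (G : ℝ → ℝ) (p : ℝ) : ℝ := sInf {x : ℝ | p ≤ G x}

/-- A distribution on ℝ is symmetric (about some point `m`). -/
def SymmetricDist (G : Measure ℝ) : Prop :=
  ∃ m : ℝ, G.map (fun x => 2 * m - x) = G

/-- A distribution on ℝ is non-degenerate: it is not a point mass. -/
def Nondegenerate (G : Measure ℝ) : Prop := ∀ c : ℝ, G ≠ Measure.dirac c

/-- A distribution is concordance inducing: non-degenerate, symmetric,
with finite second moment. -/
def ConcordanceInducing (G : Measure ℝ) : Prop :=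
  Nondegenerate G ∧ SymmetricDist G ∧ Integrable (fun x : ℝ => x ^ 2) G

/-- `corrSet ν d` is the set of `d×d` Pearson correlation matrices of random vectors
all of whose margins have distribution `ν`. -/
def corrSet (ν : Measure ℝ) (d : ℕ) : Set (Matrix (Fin d) (Fin d) ℝ) :=
  {P | ∃ μ : Measure (Fin d → ℝ), IsProbabilityMeasure μ ∧
        (∀ j, μ.map (fun x => x j) = ν) ∧
        (∀ i j, P i j = pearson μ (fun x => x i) (fun x => x j))}

/-- The Bernoulli distribution `Bern(p)` on ℝ. -/
def bern (p : ℝ) : Measure ℝ :=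
  ENNReal.ofReal p • Measure.dirac (1:ℝ) + ENNReal.ofReal (1 - p) • Measure.dirac (0:ℝ)

/-- The set of `d×d` correlation matrices of random vectors with `Bern(1/2)` margins. -/
def PBd (d : ℕ) : Set (Matrix (Fin d) (Fin d) ℝ) := corrSet (bern (1/2)) d

/-- The set of all `d×d` correlation matrices: symmetric positive semi-definite
matrices with entries in `[-1,1]` and unit diagonal. -/
def Pd (d : ℕ) : Set (Matrix (Fin d) (Fin d) ℝ) :=
  {P | P.IsSymm ∧ (∀ i j, P i j ∈ Set.Icc (-1:ℝ) 1) ∧ P.PosSemidef ∧ ∀ i, P i i = 1}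

/-- The `i`-th digit of the binary expansion `b(l)` determined by
`l = 1 + Σ_{j=1}^d b_j 2^{d−j}`; here the argument is `l − 1`,
ranging over `{0, …, 2^{d−1} − 1}`. -/
def bbit (d : ℕ) (l : ℕ) (i : Fin d) : Bool := l.testBit (d - 1 - (i : ℕ))

/-!
For `0`-`1` valued variables with mean `1/2` the correlation is an affine function of the
probability of agreement: `ℙ(X = Y) = (ρ + 1) / 2`. Only the agreement probabilities of a random bit
vector therefore matter, and these do not change when the whole vector is complemented.
Complementing according to an independent fair coin makes every margin `Bern(1/2)`, so the margins
impose no constraint on the bit vector; conversely every bit vector can be complemented so as to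
start with `0`, which leaves exactly the `2^(d-1)` binary expansions of the theorem.
-/

section Bernoulli

variable {Ω : Type*} [MeasurableSpace Ω] {μ : Measure Ω} {X Y : Ω → ℝ} {p q : ℝ}

lemma bern_eq_bernoulliMeasure (p : unitInterval) : bern p = bernoulliMeasure 1 0 p := by
  rw [bern, bernoulliMeasure_def, ← unitInterval.coe_symm_eq, ← unitInterval.coe_toNNReal,
    ← unitInterval.coe_toNNReal, ENNReal.ofReal_coe_nnreal, ENNReal.ofReal_coe_nnreal]
  rfl

lemma ae_eq_zero_or_one_of_hasLaw_bern (hX : HasLaw X (bern p) μ) :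
    ∀ᵐ ω ∂μ, X ω = 0 ∨ X ω = 1 := by
  have hmeas : Measurable fun x : ℝ ↦ x = 0 ∨ x = 1 :=
    ((measurableSet_singleton (0 : ℝ)).union (measurableSet_singleton 1)).mem
  rw [hX.ae_iff hmeas, bern, ae_add_measure_iff]
  exact ⟨Measure.ae_smul_measure (by simp [ae_dirac_eq]) _,
    Measure.ae_smul_measure (by simp [ae_dirac_eq]) _⟩

lemma integral_comp_of_hasLaw_bern (hp : p ∈ unitInterval) (hX : HasLaw X (bern p) μ) {f : ℝ → ℝ}
    (hf : Measurable f) : ∫ ω, f (X ω) ∂μ = p * f 1 + (1 - p) * f 0 := by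
  lift p to unitInterval using hp
  simpa [bern_eq_bernoulliMeasure, integral_bernoulliMeasure] using
    hX.integral_comp hf.aestronglyMeasurable

lemma integral_of_hasLaw_bern (hp : p ∈ unitInterval) (hX : HasLaw X (bern p) μ) :
    ∫ ω, X ω ∂μ = p := by
  simpa using integral_comp_of_hasLaw_bern hp hX measurable_id

lemma variance_of_hasLaw_bern (hp : p ∈ unitInterval) (hX : HasLaw X (bern p) μ) :
    variance X μ = p * (1 - p) := by
  rw [variance_eq_integral hX.aemeasurable, integral_of_hasLaw_bern hp hX,
    integral_comp_of_hasLaw_bern hp hX (f := fun x ↦ (x - p) ^ 2) (by fun_prop)]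
  ring

lemma pearson_of_hasLaw_bern (hp : p ∈ unitInterval) (hq : q ∈ unitInterval)
    (hX : HasLaw X (bern p) μ) (hY : HasLaw Y (bern q) μ) :
    pearson μ X Y =
      ((∫ ω, X ω * Y ω ∂μ) - p * q) / Real.sqrt (p * (1 - p) * (q * (1 - q))) := by
  rw [pearson, variance_of_hasLaw_bern hp hX, variance_of_hasLaw_bern hq hY,
    integral_of_hasLaw_bern hp hX, integral_of_hasLaw_bern hq hY]

lemma memLp_two_of_hasLaw_bern [IsFiniteMeasure μ] (hX : HasLaw X (bern p) μ) : MemLp X 2 μ := by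
  refine MemLp.of_bound hX.aemeasurable.aestronglyMeasurable 1 ?_
  filter_upwards [ae_eq_zero_or_one_of_hasLaw_bern hX] with ω hω
  rcases hω with hω | hω <;> simp [hω]

lemma measureReal_setOf_eq_of_hasLaw_bern [IsProbabilityMeasure μ] (hp : p ∈ unitInterval)
    (hq : q ∈ unitInterval) (hX : HasLaw X (bern p) μ) (hY : HasLaw Y (bern q) μ) :
    μ.real {ω | X ω = Y ω} = 1 - p - q + 2 * ∫ ω, X ω * Y ω ∂μ := by
  have hX2 := memLp_two_of_hasLaw_bern hX
  have hY2 := memLp_two_of_hasLaw_bern hY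
  have hXi : Integrable X μ := hX2.integrable one_le_two
  have hYi : Integrable Y μ := hY2.integrable one_le_two
  have hXYi : Integrable (fun ω ↦ X ω * Y ω) μ := hX2.integrable_mul hY2
  have indicator_ae_eq :
      {ω | X ω = Y ω}.indicator 1 =ᵐ[μ] fun ω ↦ 1 - X ω - Y ω + 2 * (X ω * Y ω) := by
    filter_upwards [ae_eq_zero_or_one_of_hasLaw_bern hX, ae_eq_zero_or_one_of_hasLaw_bern hY]
      with ω hXω hYω
    rcases hXω with hXω | hXω <;> rcases hYω with hYω | hYω <;>
      norm_num [Set.indicator, hXω, hYω]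
  calc μ.real {ω | X ω = Y ω}
      = ∫ ω, {ω | X ω = Y ω}.indicator 1 ω ∂μ := by
        rw [integral_indicator₀ (nullMeasurableSet_eq_fun hX.aemeasurable hY.aemeasurable)]
        simp
    _ = ∫ ω, 1 - X ω - Y ω + 2 * (X ω * Y ω) ∂μ := integral_congr_ae indicator_ae_eq
    _ = 1 - p - q + 2 * ∫ ω, X ω * Y ω ∂μ := by
        rw [integral_add (by fun_prop) (by fun_prop), integral_sub (by fun_prop) hYi,
          integral_sub (by fun_prop) hXi, integral_const_mul, integral_of_hasLaw_bern hp hX,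
          integral_of_hasLaw_bern hq hY]
        simp

lemma measureReal_setOf_eq_of_hasLaw_bern_half [IsProbabilityMeasure μ]
    (hX : HasLaw X (bern (1 / 2)) μ) (hY : HasLaw Y (bern (1 / 2)) μ) :
    μ.real {ω | X ω = Y ω} = (pearson μ X Y + 1) / 2 := by
  have half_mem : (1 / 2 : ℝ) ∈ unitInterval := by norm_num
  rw [measureReal_setOf_eq_of_hasLaw_bern half_mem half_mem hX hY,
    pearson_of_hasLaw_bern half_mem half_mem hX hY, Real.sqrt_mul_self (by norm_num)]
  ring

lemma hasLaw_indicator_bern [IsProbabilityMeasure μ] {s : Set Ω} (hs : MeasurableSet s) :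
    HasLaw (s.indicator 1) (bern (μ.real s)) μ where
  aemeasurable := (measurable_one.indicator hs).aemeasurable
  map_eq := by
    classical
    ext t ht
    rw [Measure.map_apply (measurable_one.indicator hs) ht, Pi.one_def,
      indicator_const_preimage_eq_union, bern, ← probReal_compl_eq_one_sub hs,
      ofReal_measureReal, ofReal_measureReal]
    by_cases h1 : (1 : ℝ) ∈ t <;> by_cases h0 : (0 : ℝ) ∈ t <;>
      simp [h1, h0, ht, measure_add_measure_compl hs]

end Bernoulli

section FiniteProbability

lemma measureReal_prod_uniformOfFintype_setOf_eq {Ω β : Type*} [MeasurableSpace Ω] [Fintype β]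
    [Nonempty β] [MeasurableSpace β] [DiscreteMeasurableSpace β] (μ : Measure Ω)
    [IsProbabilityMeasure μ] {f : Ω → β} (hf : Measurable f) :
    (μ.prod (PMF.uniformOfFintype β).toMeasure).real {z | f z.1 = z.2} =
      (Fintype.card β : ℝ)⁻¹ := by
  have hset : MeasurableSet {z : Ω × β | f z.1 = z.2} :=
    measurableSet_eq_fun (hf.comp measurable_fst) measurable_snd
  have slice (ω : Ω) : Prod.mk ω ⁻¹' {z : Ω × β | f z.1 = z.2} = {f ω} := by
    ext b
    simp [eq_comm]
  have slice_measure (b : β) :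
      (PMF.uniformOfFintype β).toMeasure {b} = (Fintype.card β : ENNReal)⁻¹ := by
    rw [PMF.toMeasure_apply_singleton _ _ .of_discrete, PMF.uniformOfFintype_apply]
  simp [measureReal_def, Measure.prod_apply hset, slice, slice_measure]

variable {ι : Type*} [Fintype ι] [MeasurableSpace ι] [MeasurableSingletonClass ι]

lemma sum_measureReal_singleton_mul_ite (ν : Measure ι) [SigmaFinite ν] (p : ι → Prop)
    [DecidablePred p] : ∑ l, ν.real {l} * (if p l then 1 else 0) = ν.real {l | p l} := by
  simp [← Finset.sum_filter]

lemma exists_measureReal_singleton_eq {α : ι → ℝ} (hα : α ∈ stdSimplex ℝ ι) :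
    ∃ ν : Measure ι, IsProbabilityMeasure ν ∧ ∀ l, ν.real {l} = α l := by
  have hsum : ∑ l, ENNReal.ofReal (α l) = 1 := by
    rw [← ENNReal.ofReal_sum_of_nonneg fun l _ ↦ hα.1 l, hα.2, ENNReal.ofReal_one]
  refine ⟨(PMF.ofFintype _ hsum).toMeasure, inferInstance, fun l ↦ ?_⟩
  rw [measureReal_def, PMF.toMeasure_apply_singleton _ _ (measurableSet_singleton l),
    PMF.ofFintype_apply, ENNReal.toReal_ofReal (hα.1 l)]

end FiniteProbability

section BinaryExpansion

lemma exists_bbit_eq {n : ℕ} {v : Fin (n + 1) → Bool} (hv : v 0 = false) :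
    ∃ l : Fin (2 ^ n), ∀ i, bbit (n + 1) l i = v i := by
  refine ⟨⟨Nat.ofBits fun k : Fin n ↦ v k.castSucc.rev, Nat.ofBits_lt_two_pow _⟩, fun i ↦ ?_⟩
  cases i using Fin.cases with
  | zero => simp [bbit, hv]
  | succ i =>
    have digit_lt : n + 1 - 1 - (i.succ : ℕ) < n := by grind
    have index_eq : (Fin.castSucc ⟨n + 1 - 1 - (i.succ : ℕ), digit_lt⟩).rev = i.succ := by grind
    rw [bbit, Nat.testBit_ofBits_lt _ _ digit_lt, index_eq]

lemma exists_forall_bbit_eq_bbit_iff {d : ℕ} (v : Fin d → Bool) :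
    ∃ l : Fin (2 ^ (d - 1)), ∀ i j, bbit d l i = bbit d l j ↔ v i = v j := by
  cases d with
  | zero => exact ⟨0, fun i ↦ i.elim0⟩
  | succ n =>
    obtain ⟨l, hl⟩ := exists_bbit_eq (v := fun i ↦ v i ^^ v 0) (Bool.xor_self _)
    exact ⟨l, fun i j ↦ by rw [hl, hl, Bool.xor_left_inj]⟩

end BinaryExpansion

section CorrelationMatrices

variable {d : ℕ} {P : Matrix (Fin d) (Fin d) ℝ}

lemma mem_PBd_of_hasLaw {Ω : Type*} [MeasurableSpace Ω] {μ : Measure Ω} [IsProbabilityMeasure μ]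
    {X : Fin d → Ω → ℝ} (hX : ∀ i, HasLaw (X i) (bern (1 / 2)) μ)
    (hP : ∀ i j, μ.real {ω | X i ω = X j ω} = (P i j + 1) / 2) : P ∈ PBd d := by
  have hvec : AEMeasurable (fun ω i ↦ X i ω) μ :=
    aemeasurable_pi_lambda _ fun i ↦ (hX i).aemeasurable
  have joint : HasLaw (fun ω i ↦ X i ω) (μ.map fun ω i ↦ X i ω) μ := ⟨hvec, rfl⟩
  have prob := Measure.isProbabilityMeasure_map hvec
  have margin (i : Fin d) : HasLaw (fun x : Fin d → ℝ ↦ x i) (bern (1 / 2))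
      (μ.map fun ω i ↦ X i ω) := by
    refine ⟨(measurable_pi_apply i).aemeasurable, ?_⟩
    rw [AEMeasurable.map_map_of_aemeasurable (measurable_pi_apply i).aemeasurable hvec]
    exact (hX i).map_eq
  refine ⟨μ.map fun ω i ↦ X i ω, prob, fun i ↦ (margin i).map_eq, fun i j ↦ ?_⟩
  have agreement := joint.measureReal_eq (p := fun x ↦ x i = x j)
    (measurableSet_eq_fun (by fun_prop) (by fun_prop))
  rw [hP, measureReal_setOf_eq_of_hasLaw_bern_half (margin i) (margin j)] at agreement
  linarith

lemma exists_measure_bool_of_mem_PBd (hP : P ∈ PBd d) :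
    ∃ ν : Measure (Fin d → Bool), IsProbabilityMeasure ν ∧
      ∀ i j, ν.real {v | v i = v j} = (P i j + 1) / 2 := by
  obtain ⟨μ, prob, margin, corr⟩ := hP
  have law (i : Fin d) : HasLaw (fun x : Fin d → ℝ ↦ x i) (bern (1 / 2)) μ :=
    ⟨(measurable_pi_apply i).aemeasurable, margin i⟩
  have hbits : Measurable fun (x : Fin d → ℝ) i ↦ decide (x i = 1) :=
    measurable_pi_lambda _ fun i ↦ measurable_to_bool <| by
      simpa [preimage] using
        measurableSet_eq_fun (measurable_pi_apply i) (measurable_const (a := (1 : ℝ)))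
  refine ⟨μ.map fun x i ↦ decide (x i = 1), Measure.isProbabilityMeasure_map hbits.aemeasurable,
    fun i j ↦ ?_⟩
  rw [map_measureReal_apply hbits .of_discrete, corr,
    ← measureReal_setOf_eq_of_hasLaw_bern_half (law i) (law j)]
  refine measureReal_congr ?_
  filter_upwards [ae_eq_zero_or_one_of_hasLaw_bern (law i),
    ae_eq_zero_or_one_of_hasLaw_bern (law j)] with x hi hj
  refine propext (?_ : decide (x i = 1) = decide (x j = 1) ↔ x i = x j)
  rcases hi with hi | hi <;> rcases hj with hj | hj <;> simp [hi, hj]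

lemma mem_PBd_of_measure_bool {ν : Measure (Fin d → Bool)} [IsProbabilityMeasure ν]
    (hP : ∀ i j, ν.real {v | v i = v j} = (P i j + 1) / 2) : P ∈ PBd d := by
  let μ : Measure ((Fin d → Bool) × Bool) := ν.prod (PMF.uniformOfFintype Bool).toMeasure
  let coinMatch (i : Fin d) : Set ((Fin d → Bool) × Bool) := {z | z.1 i = z.2}
  refine mem_PBd_of_hasLaw (μ := μ) (X := fun i ↦ (coinMatch i).indicator 1)
    (fun i ↦ ?_) fun i j ↦ ?_
  · have coinMatch_half : μ.real (coinMatch i) = 1 / 2 := by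
      simpa using measureReal_prod_uniformOfFintype_setOf_eq ν (measurable_pi_apply i)
    exact coinMatch_half ▸ hasLaw_indicator_bern .of_discrete
  · have agreement :
        {z | (coinMatch i).indicator (1 : (Fin d → Bool) × Bool → ℝ) z =
          (coinMatch j).indicator 1 z} = {v | v i = v j} ×ˢ univ := by
      ext ⟨v, c⟩
      cases hi : v i <;> cases hj : v j <;> cases c <;> simp [coinMatch, hi, hj]
    rw [agreement, measureReal_prod_prod, hP, probReal_univ, mul_one]

lemma exists_weights_of_mem_PBd (hP : P ∈ PBd d) :
    ∃ α ∈ stdSimplex ℝ (Fin (2 ^ (d - 1))), ∀ i j : Fin d,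
      ∑ l, α l * (if bbit d l i = bbit d l j then 1 else 0) = (P i j + 1) / 2 := by
  obtain ⟨ν, prob, agreement⟩ := exists_measure_bool_of_mem_PBd hP
  choose index hindex using exists_forall_bbit_eq_bbit_iff (d := d)
  have prob_index : IsProbabilityMeasure (ν.map index) :=
    Measure.isProbabilityMeasure_map Measurable.of_discrete.aemeasurable
  refine ⟨fun l ↦ (ν.map index).real {l}, ⟨fun _ ↦ measureReal_nonneg, by simp⟩, fun i j ↦ ?_⟩
  rw [sum_measureReal_singleton_mul_ite _ fun l : Fin _ ↦ bbit d l i = bbit d l j,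
    map_measureReal_apply .of_discrete .of_discrete, ← agreement]
  simp only [preimage_ofPred_eq, hindex]

lemma mem_PBd_of_weights {α : Fin (2 ^ (d - 1)) → ℝ}
    (hα : α ∈ stdSimplex ℝ (Fin (2 ^ (d - 1)))) (hP : ∀ i j : Fin d,
      ∑ l, α l * (if bbit d l i = bbit d l j then 1 else 0) = (P i j + 1) / 2) : P ∈ PBd d := by
  obtain ⟨ν, prob, weight⟩ := exists_measureReal_singleton_eq hα
  have prob_bits : IsProbabilityMeasure (ν.map fun l : Fin _ ↦ bbit d l) :=
    Measure.isProbabilityMeasure_map Measurable.of_discrete.aemeasurable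
  refine mem_PBd_of_measure_bool (ν := ν.map fun l : Fin _ ↦ bbit d l) fun i j ↦ ?_
  rw [map_measureReal_apply .of_discrete .of_discrete, ← hP]
  simp only [← weight]
  exact (sum_measureReal_singleton_mul_ite ν fun l : Fin _ ↦ bbit d l i = bbit d l j).symm

end CorrelationMatrices

/-- a symmetric matrix `P ∈ [−1,1]^{d×d}` with unit diagonal is the
correlation matrix of a random vector with `Bern(1/2)` margins iff there exist
`α_1, …, α_{2^{d−1}} ≥ 0` with `Σ_l α_l = 1` and
`Σ_l α_l·1{b_i(l) = b_j(l)} = (ρ_{ij} + 1)/2` for all `i < j`. -/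
theorem bernoulli_compatibility_linear_program (d : ℕ)
    (P : Matrix (Fin d) (Fin d) ℝ) (hsym : P.IsSymm)
    (hrange : ∀ i j, P i j ∈ Set.Icc (-1:ℝ) 1) (hdiag : ∀ i, P i i = 1) :
    P ∈ PBd d ↔
      ∃ α : Fin (2^(d-1)) → ℝ, (∀ l, 0 ≤ α l) ∧ (∑ l, α l = 1) ∧
        ∀ i j : Fin d, i < j →
          (∑ l, α l * (if bbit d (l : ℕ) i = bbit d (l : ℕ) j then (1:ℝ) else 0))
            = (P i j + 1) / 2 := by
  constructor
  · intro hP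
    obtain ⟨α, hα, agreement⟩ := exists_weights_of_mem_PBd hP
    exact ⟨α, hα.1, hα.2, fun i j _ ↦ agreement i j⟩
  · rintro ⟨α, nonneg, sum_eq_one, agreement⟩
    refine mem_PBd_of_weights ⟨nonneg, sum_eq_one⟩ fun i j ↦ ?_
    rcases lt_trichotomy i j with hij | rfl | hji
    · exact agreement i j hij
    · simp [sum_eq_one, hdiag]
    · simpa only [hsym.apply, eq_comm (a := bbit d _ j)] using agreement j i hji
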